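/- If F: A^Z → A^Z is a rapidly left expansive cellular automaton and x is a number-like configuration, then frac(F^t(x)) = frac(x) holds for only finitely many t ∈ N, where frac(y) = (y[j])_{j≥0}. -/

import Mathlib

/-- `F` is a cellular automaton: it is given by some `(m,n)` local rule. -/
def IsCA {A : Type*} (F : (ℤ → A) → ℤ → A) : Prop :=
  ∃ (m n : ℕ) (f : (Fin (m + n + 1) → A) → A),
    ∀ x i, F x i = f fun k => x (i - (m : ℤ) + (k.val : ℤ))

/-- `F` is left expansive with dimensions `(h, d, w)`: the contents of a translated
rectangle (spatial offsets `0,...,w-1`, time iterates `t - b` for `-d ≤ b ≤ h`) in any two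
space-time diagrams determine the symbol immediately to the left of the rectangle
(at time iterate `t`). -/
def LeftExpansive {A : Type*} (F : (ℤ → A) → ℤ → A) (h d w : ℕ) : Prop :=
  ∀ (x₁ x₂ : ℤ → A) (i₁ i₂ : ℤ) (t₁ t₂ : ℕ), h ≤ t₁ → h ≤ t₂ →
    (∀ (a : ℕ) (b : ℤ), a < w → -(d : ℤ) ≤ b → b ≤ (h : ℤ) →
      F^[((t₁ : ℤ) - b).toNat] x₁ (i₁ + (a : ℤ)) = F^[((t₂ : ℤ) - b).toNat] x₂ (i₂ + (a : ℤ))) →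
    F^[t₁] x₁ (i₁ - 1) = F^[t₂] x₂ (i₂ - 1)

/-- A one-sided sequence is eventually `p`-periodic for some `p ≥ 1`. -/
def EvPeriodicSeq {B : Type*} (y : ℕ → B) : Prop :=
  ∃ p : ℕ, 1 ≤ p ∧ ∃ c : ℕ, ∀ t, c ≤ t → y (t + p) = y t

/-- A configuration is number-like: nonzero, and zero at all sufficiently small coordinates. -/
def NumberLike {A : Type*} [Zero A] (x : ℤ → A) : Prop :=
  (∃ i, x i ≠ 0) ∧ ∃ N : ℤ, ∀ i < N, x i = 0

/-- The left edge of a configuration: the least coordinate with a nonzero symbol. -/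
noncomputable def lbound {A : Type*} [Zero A] (x : ℤ → A) : ℤ :=
  sInf {N : ℤ | x N ≠ 0}

/-- `F` is left spreading on number-like configurations. -/
def LeftSpreading {A : Type*} [Zero A] (F : (ℤ → A) → ℤ → A) : Prop :=
  F (fun _ => 0) = (fun _ => 0) ∧
    ∀ x, NumberLike x → ∃ t : ℕ, 1 ≤ t ∧ lbound (F^[t] x) < lbound x

/-- The spreading speed of `F`:
`sup` over number-like `x` of `limsup_t (-lbound(F^t(x)))/t`. -/
noncomputable def spreadingSpeed {A : Type*} [Zero A] (F : (ℤ → A) → ℤ → A) : ℝ :=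
  ⨆ x : {x : ℤ → A // NumberLike x},
    Filter.limsup (fun t : ℕ => -((lbound (F^[t] x.1) : ℝ)) / (t : ℝ)) Filter.atTop

/-- `F` is rapidly left expansive with width `w`: left expansive with dimensions `(h,d,w)`,
left spreading with spreading speed `s`, and `s < 1/h` (equivalently `s * h < 1`,
which also covers the case `h = 0`). -/
def RapidlyLeftExpansive {A : Type*} [Zero A] (F : (ℤ → A) → ℤ → A) (w : ℕ) : Prop :=
  ∃ h d : ℕ, LeftExpansive F h d w ∧ LeftSpreading F ∧ spreadingSpeed F * (h : ℝ) < 1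

theorem lbound_mem {A : Type*} [Zero A] {x : ℤ → A} (hx : NumberLike x) : x (lbound x) ≠ 0 := by
  obtain ⟨⟨i, hi⟩, N, hN⟩ := hx
  have : lbound x ∈ {N : ℤ | x N ≠ 0} := by
    apply Int.csInf_mem ⟨i, hi⟩
    refine ⟨N, fun j hj => ?_⟩
    by_contra hlt
    exact hj (hN j (by omega))
  exact this

theorem lbound_le_of {A : Type*} [Zero A] {x : ℤ → A} (hx : NumberLike x) {i : ℤ}
    (hi : x i ≠ 0) : lbound x ≤ i := by
  obtain ⟨_, N, hN⟩ := hx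
  apply csInf_le
  · refine ⟨N, fun j hj => ?_⟩
    by_contra hlt
    exact hj (hN j (by omega))
  · exact hi

theorem zero_below {A : Type*} [Zero A] {x : ℤ → A} (hx : NumberLike x) {i : ℤ}
    (hi : i < lbound x) : x i = 0 := by
  by_contra h
  have := lbound_le_of hx h
  omega

theorem ca_local {A : Type*} {F : (ℤ → A) → ℤ → A} (hF : IsCA F) :
    ∃ m n : ℕ, ∀ x y : ℤ → A, ∀ i : ℤ, (∀ j, i - m ≤ j → j ≤ i + n → x j = y j) →
      F x i = F y i := by
  obtain ⟨m, n, f, hf⟩ := hF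
  refine ⟨m, n, fun x y i h => ?_⟩
  rw [hf, hf]
  congr 1
  funext k
  have := k.2
  exact h _ (by omega) (by omega)

theorem ca_shift {A : Type*} {F : (ℤ → A) → ℤ → A} (hF : IsCA F) (x : ℤ → A) (c i : ℤ) :
    F (fun j => x (j + c)) i = F x (i + c) := by
  obtain ⟨m, n, f, hf⟩ := hF
  rw [hf, hf]
  congr 1
  funext k
  congr 1
  ring

theorem zero_iter {A : Type*} [Zero A] {F : (ℤ → A) → ℤ → A} (h0 : F (fun _ => 0) = fun _ => 0)
    (t : ℕ) : F^[t] (fun _ => 0) = fun _ => 0 := Function.iterate_fixed h0 t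

theorem numberLike_step {A : Type*} [Zero A] {F : (ℤ → A) → ℤ → A} (hF : IsCA F)
    (hs : LeftSpreading F) {x : ℤ → A} (hx : NumberLike x) : NumberLike (F x) := by
  constructor
  · by_contra hne
    push Not at hne
    set c := lbound x with hc
    set y : ℤ → A := fun j => x (j + c) with hy
    have hyN : NumberLike y := by
      refine ⟨⟨0, ?_⟩, 0, fun i hi => ?_⟩
      · simpa [hy] using lbound_mem hx
      · exact zero_below hx (by omega)
    have hFy : F y = fun _ => 0 := by
      funext i
      rw [hy, ca_shift hF, hne]
    have hly : lbound y ≤ 0 := lbound_le_of hyN (by simpa [hy] using lbound_mem hx)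
    obtain ⟨t, ht, hlt⟩ := hs.2 y hyN
    obtain ⟨u, rfl⟩ : ∃ u, t = u + 1 := ⟨t - 1, by omega⟩
    rw [Function.iterate_succ_apply, hFy, zero_iter hs.1] at hlt
    have : lbound (fun _ : ℤ => (0 : A)) = 0 := by simp [lbound]
    omega
  · obtain ⟨m, n, hl⟩ := ca_local hF
    refine ⟨lbound x - n, fun i hi => ?_⟩
    rw [hl x (fun _ => 0) i (fun j _ hj => zero_below hx (by omega)), hs.1]

theorem numberLike_iter {A : Type*} [Zero A] {F : (ℤ → A) → ℤ → A} (hF : IsCA F)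
    (hs : LeftSpreading F) {x : ℤ → A} (hx : NumberLike x) (t : ℕ) : NumberLike (F^[t] x) := by
  induction t with
  | zero => exact hx
  | succ t ih => rw [Function.iterate_succ_apply']; exact numberLike_step hF hs ih

theorem lbound_lower {A : Type*} [Zero A] {F : (ℤ → A) → ℤ → A} (hF : IsCA F)
    (hs : LeftSpreading F) : ∃ n : ℕ, ∀ x, NumberLike x → ∀ t : ℕ,
      lbound x - n * t ≤ lbound (F^[t] x) := by
  obtain ⟨m, n, hl⟩ := ca_local hF
  refine ⟨n, fun x hx t => ?_⟩
  induction t with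
  | zero => simp
  | succ t ih =>
    have h1 := numberLike_iter hF hs hx t
    have h2 := numberLike_iter hF hs hx (t + 1)
    have h3 := lbound_mem h2
    by_contra hlt
    push Not at hlt
    apply h3
    rw [Function.iterate_succ_apply',
      hl (F^[t] x) (fun _ => 0) _ (fun j _ hj => zero_below h1 ?_), hs.1]
    rw [← Function.iterate_succ_apply' F t x] at hj
    push_cast at hlt
    nlinarith

theorem frequently_le {A : Type*} [Zero A] {F : (ℤ → A) → ℤ → A} (hF : IsCA F)
    (hs : LeftSpreading F) {x : ℤ → A} (hx : NumberLike x) (T : ℕ) :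
    ∃ t, T ≤ t ∧ lbound (F^[t] x) ≤ lbound x := by
  induction T with
  | zero => exact ⟨0, le_rfl, le_rfl⟩
  | succ T ih =>
    obtain ⟨t, ht, hle⟩ := ih
    obtain ⟨u, hu, hlt⟩ := hs.2 _ (numberLike_iter hF hs hx t)
    rw [← Function.iterate_add_apply] at hlt
    exact ⟨u + t, by omega, by omega⟩

theorem eventually_ratio_le {A : Type*} [Zero A] {F : (ℤ → A) → ℤ → A} (hF : IsCA F)
    (hs : LeftSpreading F) : ∃ C : ℝ, ∀ x, NumberLike x → ∀ᶠ t : ℕ in Filter.atTop,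
      -((lbound (F^[t] x) : ℝ)) / (t : ℝ) ≤ C := by
  obtain ⟨n, hn⟩ := lbound_lower hF hs
  refine ⟨n + 1, fun x hx => ?_⟩
  filter_upwards [Filter.eventually_ge_atTop ((lbound x).natAbs + 1)] with t ht
  have htp : (0 : ℝ) < t := by exact_mod_cast (by omega : 0 < t)
  rw [div_le_iff₀ htp]
  have h1 : ((lbound x - n * t : ℤ) : ℝ) ≤ lbound (F^[t] x) := by exact_mod_cast hn x hx t
  have h2 : ((-lbound x : ℤ) : ℝ) ≤ ((t : ℤ) : ℝ) := by exact_mod_cast (by omega : -lbound x ≤ t)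
  push_cast at h1 h2
  nlinarith

theorem limsup_le_speed {A : Type*} [Zero A] {F : (ℤ → A) → ℤ → A} (hF : IsCA F)
    (hs : LeftSpreading F) {x : ℤ → A} (hx : NumberLike x) {r : ℝ} (hr : spreadingSpeed F < r) :
    ∀ᶠ t : ℕ in Filter.atTop, -((lbound (F^[t] x) : ℝ)) / (t : ℝ) < r := by
  obtain ⟨C, hC⟩ := eventually_ratio_le hF hs
  have hbdd : BddAbove (Set.range fun x : {x : ℤ → A // NumberLike x} =>
      Filter.limsup (fun t : ℕ => -((lbound (F^[t] x.1) : ℝ)) / (t : ℝ)) Filter.atTop) := by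
    refine ⟨C, ?_⟩
    rintro _ ⟨⟨y, hy⟩, rfl⟩
    refine Filter.limsup_le_of_le ?_ (hC y hy)
    refine Filter.IsCoboundedUnder.of_frequently_ge (a := -|(lbound y : ℝ)|) ?_
    rw [Filter.frequently_atTop]
    intro T
    obtain ⟨t, ht, hle⟩ := frequently_le hF hs hy (T + 1)
    refine ⟨t, by omega, ?_⟩
    have htp : (1 : ℝ) ≤ t := by exact_mod_cast (by omega : 1 ≤ t)
    change _ ≤ _ / _
    rw [le_div_iff₀ (by linarith)]
    have h1 : (lbound (F^[t] y) : ℝ) ≤ lbound y := by exact_mod_cast hle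
    have h2 := le_abs_self (lbound y : ℝ)
    have h3 := abs_nonneg (lbound y : ℝ)
    nlinarith
  have hle := le_ciSup hbdd ⟨x, hx⟩
  exact Filter.eventually_lt_of_limsup_lt (lt_of_le_of_lt hle hr) ⟨C, by simpa using hC x hx⟩

theorem not_periodic {A : Type*} [Zero A] {F : (ℤ → A) → ℤ → A} (hF : IsCA F)
    (hs : LeftSpreading F) {x : ℤ → A} (hx : NumberLike x) {p : ℕ} (hp : 1 ≤ p) :
    F^[p] x ≠ x := by
  intro h
  obtain ⟨j, hj, hmin⟩ := Finset.exists_min_image (Finset.range p) (fun j => lbound (F^[j] x))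
    ⟨0, by simpa using by omega⟩
  obtain ⟨u, hu, hlt⟩ := hs.2 _ (numberLike_iter hF hs hx j)
  rw [← Function.iterate_add_apply] at hlt
  have hper : Function.IsPeriodicPt F p x := h
  have h1 := hmin ((u + j) % p) (by simpa using Nat.mod_lt _ hp)
  simp only [hper.iterate_mod_apply] at h1
  omega

theorem agree_iter {A : Type*} {F : (ℤ → A) → ℤ → A} {m n : ℕ}
    (hl : ∀ x y : ℤ → A, ∀ i : ℤ, (∀ j, i - m ≤ j → j ≤ i + n → x j = y j) → F x i = F y i)
    {x y : ℤ → A} {R : ℤ} (h : ∀ i, R ≤ i → x i = y i) (t : ℕ) :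
    ∀ i, R + m * t ≤ i → F^[t] x i = F^[t] y i := by
  induction t with
  | zero => simpa using h
  | succ t ih =>
    intro i hi
    rw [Function.iterate_succ_apply', Function.iterate_succ_apply']
    push_cast at hi
    exact hl _ _ _ fun j hj _ => ih j (by linarith)

/-- If `F` is a rapidly left expansive CA and `x` is a number-like configuration, then
`frac(F^t(x)) = frac(x)` holds for only finitely many `t ∈ ℕ`. -/
theorem stmt_12 {A : Type*} [Zero A] [Fintype A] (F : (ℤ → A) → ℤ → A) (hF : IsCA F)
    (w : ℕ) (hw : 1 ≤ w) (hre : RapidlyLeftExpansive F w)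
    (x : ℤ → A) (hx : NumberLike x) :
    {t : ℕ | ∀ j : ℕ, F^[t] x (j : ℤ) = x (j : ℤ)}.Finite := by
  obtain ⟨h, d, hexp, hs, hspeed⟩ := hre
  obtain ⟨m, n, hl⟩ := ca_local hF
  by_contra hinf
  have hinf : {t : ℕ | ∀ j : ℕ, F^[t] x (j : ℤ) = x (j : ℤ)}.Infinite := hinf
  obtain ⟨p, hpS, hp⟩ := hinf.exists_gt 0
  have ret : ∀ t : ℕ, (∀ j : ℕ, F^[t] x (j : ℤ) = x (j : ℤ)) → ∀ i : ℤ, 0 ≤ i →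
      F^[t] x i = x i := by
    intro t ht i hi
    lift i to ℕ using hi
    exact ht i
  -- (a)
  have ha : ∀ (t : ℕ) (i : ℤ), F^[t] x i ≠ F^[t + p] x i → i < m * t := by
    intro t i hD
    by_contra hlt
    push Not at hlt
    apply hD
    rw [Function.iterate_add_apply]
    exact (agree_iter hl (ret p hpS) t i (by linarith)).symm
  -- (b)
  have hb : ∀ T : ℕ, (∀ j : ℕ, F^[T] x (j : ℤ) = x (j : ℤ)) → ∀ (j : ℕ) (i : ℤ),
      F^[T + j] x i ≠ F^[T + j + p] x i → i < m * (p + j) := by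
    intro T hT j i hD
    by_contra hlt
    push Not at hlt
    apply hD
    have e1 := agree_iter hl (ret T hT) j i (by nlinarith)
    have e2 := agree_iter hl (ret T hT) (p + j) i (by push_cast; linarith)
    have e3 := agree_iter hl (ret p hpS) j i (by nlinarith)
    rw [← Function.iterate_add_apply] at e1 e2 e3
    rw [show T + j = j + T by ring, show j + T + p = p + j + T by ring, e1, e2, ← e3, add_comm p j]
  -- (c)
  have hc : ∀ t : ℕ, ∃ i, F^[t] x i ≠ F^[t + p] x i := by
    intro t
    by_contra hne
    push Not at hne
    apply not_periodic hF hs (numberLike_iter hF hs hx t) hp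
    rw [← Function.iterate_add_apply, add_comm]
    exact (funext hne).symm
  -- (e)
  have he : ∀ (t : ℕ) (i : ℤ), h ≤ t → F^[t] x i ≠ F^[t + p] x i →
      ∃ (t' : ℕ) (i' : ℤ), t ≤ t' + h ∧ t' ≤ t + d ∧ i < i' ∧
        F^[t'] x i' ≠ F^[t' + p] x i' := by
    intro t i ht hD
    by_contra hno
    push Not at hno
    apply hD
    have := hexp x (F^[p] x) (i + 1) (i + 1) t t ht ht ?_
    · rw [← Function.iterate_add_apply] at this
      simpa using this
    · intro a b _ hb1 hb2
      rw [← Function.iterate_add_apply]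
      exact hno _ _ (by omega) (by omega) (by omega)
  -- the speed
  obtain ⟨r, hr0, hsr, hrh⟩ : ∃ r : ℝ, 0 ≤ r ∧ spreadingSpeed F < r ∧ r * h < 1 := by
    have hh : (0 : ℝ) ≤ h := Nat.cast_nonneg h
    set s := max (spreadingSpeed F) 0 with hsdef
    have hs1 : s * h < 1 := by
      rcases max_choice (spreadingSpeed F) 0 with h1 | h1
      · rw [hsdef, h1]; exact hspeed
      · rw [hsdef, h1]; simp
    have hs0 : 0 ≤ s := le_max_right _ _
    have hs2 : spreadingSpeed F ≤ s := le_max_left _ _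
    have hpos : 0 < (1 - s * h) / (h + 1) := div_pos (by linarith) (by linarith)
    refine ⟨s + (1 - s * h) / (h + 1), by linarith, by linarith, ?_⟩
    have : (1 - s * h) / (h + 1) * (h + 1) = 1 - s * h := div_mul_cancel₀ _ (by linarith)
    nlinarith
  obtain ⟨T0, hT0⟩ := Filter.eventually_atTop.1 (limsup_le_speed hF hs hx hsr)
  have hlow : ∀ (t : ℕ), T0 + 1 ≤ t → ∀ i, F^[t] x i ≠ 0 → -(r * t) ≤ (i : ℝ) := by
    intro t ht i hi
    have h1 := hT0 t (by omega)
    have htp : (0 : ℝ) < t := by exact_mod_cast (by omega : 0 < t)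
    rw [div_lt_iff₀ htp] at h1
    have h2 : (lbound (F^[t] x) : ℝ) ≤ i := by
      exact_mod_cast lbound_le_of (numberLike_iter hF hs hx t) hi
    linarith
  have hd : ∀ (t : ℕ), T0 + 1 ≤ t → ∀ i, F^[t] x i ≠ F^[t + p] x i →
      -(r * (t + p)) ≤ (i : ℝ) := by
    intro t ht i hD
    by_cases h1 : F^[t] x i = 0
    · have := hlow (t + p) (by omega) i (fun h2 => hD (h1.trans h2.symm))
      push_cast at this
      exact this
    · have := hlow t ht i h1
      have hpp : (0 : ℝ) ≤ p := Nat.cast_nonneg p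
      nlinarith
  -- choose the starting time
  obtain ⟨t1, ht1⟩ := exists_nat_gt ((h + h * (m * h) + h * (r * p)) / (1 - r * h))
  set t0 := max t1 (T0 + 1) with ht0
  have hbig : (h + h * (m * h) + h * (r * p) : ℝ) < t0 * (1 - r * h) := by
    rw [div_lt_iff₀ (by linarith)] at ht1
    have : (t1 : ℝ) ≤ t0 := by exact_mod_cast le_max_left _ _
    nlinarith
  obtain ⟨i0, hi0⟩ := hc t0
  have hi0r := hd t0 (le_max_right _ _) i0 hi0
  set K : ℕ := ((m * (p + d) : ℤ) - i0).toNat with hK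
  obtain ⟨T, hTS, hT⟩ := hinf.exists_gt (t0 + d * K)
  have chain : ∀ k : ℕ, ∃ (t : ℕ) (i : ℤ), F^[t] x i ≠ F^[t + p] x i ∧ i0 + k ≤ i ∧
      t0 ≤ t + h * k ∧ t ≤ t0 + d * k ∧ t < T := by
    intro k
    induction k with
    | zero => exact ⟨t0, i0, hi0, by simp, by simp, by simp, by nlinarith⟩
    | succ k ih =>
      obtain ⟨t, i, hD, hik, hlo, hhi, htT⟩ := ih
      have hht : h ≤ t := by
        by_contra hlt
        push Not at hlt
        have h1 := ha t i hD
        have h2 : i0 + k < m * h := by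
          have : (t : ℤ) ≤ h := by exact_mod_cast hlt.le
          nlinarith
        have h3 : (i0 : ℝ) + k < m * h := by exact_mod_cast h2
        have h4 : (t0 : ℝ) ≤ t + h * k := by exact_mod_cast hlo
        have h5 : (t : ℝ) < h := by exact_mod_cast hlt
        have hh : (0 : ℝ) ≤ h := Nat.cast_nonneg h
        have h6 : (h : ℝ) * k ≤ h * (m * h + r * (t0 + p)) :=
          mul_le_mul_of_nonneg_left (by linarith) hh
        nlinarith
      obtain ⟨t', i', q1, q2, q3, q4⟩ := he t i hht hD
      have hhi' : t' ≤ t0 + d * (k + 1) := by nlinarith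
      refine ⟨t', i', q4, by push_cast; omega, by nlinarith, hhi', ?_⟩
      by_contra hge
      push Not at hge
      obtain ⟨j, rfl⟩ := Nat.exists_eq_add_of_le hge
      have h1 := hb T hTS j i' q4
      have h2 : i' < m * (p + d) := by
        have : (j : ℤ) ≤ d := by omega
        have : (m : ℤ) * (p + j) ≤ m * (p + d) := by gcongr
        omega
      have h3 : k + 1 ≤ K := by omega
      have : d * (k + 1) ≤ d * K := Nat.mul_le_mul_left d h3
      omega
  obtain ⟨t, i, hD, hik, -, -, htT⟩ := chain ((m * T : ℤ) - i0).toNat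
  have h1 := ha t i hD
  have h2 : (m : ℤ) * t ≤ m * T := by
    have : (t : ℤ) ≤ T := by omega
    gcongr
  omega
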